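/- The functor i_* : D^b(B-Mod) → D^b(A-Mod) between bounded derived categories induced by restriction of scalars along the quotient map A → B is fully faithful, admits a right adjoint i^! (given by RHom_A(B, −)), and the composite i^! ∘ i_* is naturally isomorphic to the identity functor of D^b(B-Mod). -/

import Mathlib

universe u

open CategoryTheory Abelian

noncomputable instance moduleCatHasDerivedCategory (R : Type u) [Ring R] :
    HasDerivedCategory (ModuleCat.{u} R) :=
  HasDerivedCategory.standard _

section RestrictScalars

variable {R₁ R₂ : Type u} [Ring R₁] [Ring R₂] (f : R₁ →+* R₂)

instance : (ModuleCat.restrictScalars.{u} f).Additive := ⟨rfl⟩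

noncomputable instance : Limits.PreservesFiniteLimits (ModuleCat.restrictScalars.{u} f) :=
  ⟨fun _ _ _ => ⟨fun {F} => ModuleCat.preservesLimit_restrictScalars f F⟩⟩

noncomputable instance : Limits.PreservesFiniteColimits (ModuleCat.restrictScalars.{u} f) :=
  ⟨fun _ _ _ => ⟨fun {F} => ModuleCat.preservesColimit_restrictScalars f F⟩⟩

end RestrictScalars
/-- A cochain complex is bounded if its components vanish outside a finite
range of degrees. -/
def IsBoundedComplex {C : Type*} [Category C] [Limits.HasZeroMorphisms C]
    (K : CochainComplex C ℤ) : Prop :=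
  ∃ a b : ℤ, ∀ i : ℤ, (i < a ∨ b < i) → Limits.IsZero (K.X i)

/-- The bounded derived category `D^b(C)`, realized as the full subcategory of
the derived category of `C` consisting of objects which are isomorphic to the
image of a bounded complex. -/
def BoundedDerivedCategory (C : Type*) [Category C] [Abelian C]
    [HasDerivedCategory C] :=
  ObjectProperty.FullSubcategory (fun Z : DerivedCategory C =>
    ∃ K : CochainComplex C ℤ, IsBoundedComplex K ∧ Nonempty (Z ≅ DerivedCategory.Q.obj K))

noncomputable instance (C : Type*) [Category C] [Abelian C] [HasDerivedCategory C] :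
    Category (BoundedDerivedCategory C) :=
  inferInstanceAs (Category (ObjectProperty.FullSubcategory _))

/-- The inclusion `D^b(C) ⥤ D(C)`. -/
noncomputable def boundedInclusion (C : Type*) [Category C] [Abelian C]
    [HasDerivedCategory C] : BoundedDerivedCategory C ⥤ DerivedCategory C :=
  ObjectProperty.ι _

/-- The quotient ring `B = A / I`. -/
def QuotByIdeal (A : Type u) [Ring A] (I : Ideal A) : Type u :=
  RingQuot (fun a b : A => a ∈ I ∧ b = 0)

noncomputable instance (A : Type u) [Ring A] (I : Ideal A) : Ring (QuotByIdeal A I) :=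
  inferInstanceAs (Ring (RingQuot _))

/-- The quotient map `A → B = A / I`. -/
noncomputable def quotByIdealProj (A : Type u) [Ring A] (I : Ideal A) :
    A →+* QuotByIdeal A I :=
  RingQuot.mkRingHom _

section GeneralAdjunction

open CategoryTheory Limits

variable {C D : Type*} [Category C] [Abelian C] [HasDerivedCategory C]
  [Category D] [Abelian D] [HasDerivedCategory D]

lemma Q_map_surj_of_isKInjective (X L : CochainComplex C ℤ) [L.IsKInjective]
    (f : DerivedCategory.Q.obj X ⟶ DerivedCategory.Q.obj L) :
    ∃ φ : X ⟶ L, DerivedCategory.Q.map φ = f := by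
  obtain ⟨g, hg⟩ := (CochainComplex.IsKInjective.Qh_map_bijective
    ((HomotopyCategory.quotient _ _).obj X) L).surjective
    ((DerivedCategory.quotientCompQhIso C).hom.app X ≫ f ≫
      (DerivedCategory.quotientCompQhIso C).inv.app L)
  obtain ⟨φ, rfl⟩ := (HomotopyCategory.quotient _ _).map_surjective g
  refine ⟨φ, ?_⟩
  rw [← cancel_epi ((DerivedCategory.quotientCompQhIso C).hom.app X),
    ← DerivedCategory.quotientCompQhIso_hom_naturality]
  rw [hg]
  simp

lemma homotopy_of_Q_map_eq (X L : CochainComplex C ℤ) [L.IsKInjective]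
    (φ ψ : X ⟶ L) (h : DerivedCategory.Q.map φ = DerivedCategory.Q.map ψ) :
    Nonempty (Homotopy φ ψ) := by
  refine ⟨HomotopyCategory.homotopyOfEq _ _ ?_⟩
  apply (CochainComplex.IsKInjective.Qh_map_bijective _ L).injective
  rw [← cancel_mono ((DerivedCategory.quotientCompQhIso C).hom.app L),
    DerivedCategory.quotientCompQhIso_hom_naturality,
    DerivedCategory.quotientCompQhIso_hom_naturality, h]

lemma Q_map_eq_of_homotopy {X L : CochainComplex C ℤ} {φ ψ : X ⟶ L} (h : Homotopy φ ψ) :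
    DerivedCategory.Q.map φ = DerivedCategory.Q.map ψ := by
  rw [← cancel_epi ((DerivedCategory.quotientCompQhIso C).hom.app X),
    ← DerivedCategory.quotientCompQhIso_hom_naturality,
    ← DerivedCategory.quotientCompQhIso_hom_naturality, HomotopyCategory.eq_of_homotopy _ _ h]

variable {G : C ⥤ D} {F : D ⥤ C} (adj : G ⊣ F) [G.Additive] [F.Additive]

lemma transpose_comm {a b : C} {p q : D} (u : G.obj a ⟶ p) (v : G.obj b ⟶ q) (d : a ⟶ b)
    (d' : p ⟶ q) (h : u ≫ d' = G.map d ≫ v) :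
    adj.homEquiv _ _ u ≫ F.map d' = d ≫ adj.homEquiv _ _ v := by
  rw [← adj.homEquiv_naturality_right, h, adj.homEquiv_naturality_left]

lemma transpose_counit {a : C} {p : D} (u : G.obj a ⟶ p) :
    G.map (adj.homEquiv _ _ u) ≫ adj.counit.app p = u := by
  simp [Adjunction.homEquiv_unit]

lemma transpose_id {a : C} {p : D} (u : a ⟶ F.obj p) :
    adj.homEquiv _ _ (𝟙 (G.obj a)) ≫ F.map (G.map u ≫ adj.counit.app p) = u := by
  simp [Adjunction.homEquiv_unit]

/-- The transpose of a morphism of complexes under the adjunction. -/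
noncomputable def cplxTranspose {X : CochainComplex C ℤ} {J : CochainComplex D ℤ}
    (γ : (G.mapHomologicalComplex (ComplexShape.up ℤ)).obj X ⟶ J) :
    X ⟶ (F.mapHomologicalComplex (ComplexShape.up ℤ)).obj J where
  f i := adj.homEquiv _ _ (γ.f i)
  comm' i j hij := transpose_comm adj _ _ _ _ (γ.comm i j)

/-- The counit on complexes. -/
noncomputable def cplxCounit (J : CochainComplex D ℤ) :
    (G.mapHomologicalComplex (ComplexShape.up ℤ)).obj
      ((F.mapHomologicalComplex (ComplexShape.up ℤ)).obj J) ⟶ J where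
  f i := adj.counit.app (J.X i)
  comm' i j hij := (adj.counit.naturality (J.d i j)).symm

lemma cplxTranspose_counit {X : CochainComplex C ℤ} {J : CochainComplex D ℤ}
    (γ : (G.mapHomologicalComplex (ComplexShape.up ℤ)).obj X ⟶ J) :
    (G.mapHomologicalComplex (ComplexShape.up ℤ)).map (cplxTranspose adj γ) ≫ cplxCounit adj J
      = γ := by
  ext i
  exact transpose_counit adj (γ.f i)

lemma homotopy_of_counit {X : CochainComplex C ℤ} {J : CochainComplex D ℤ}
    (φ ψ : X ⟶ (F.mapHomologicalComplex (ComplexShape.up ℤ)).obj J)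
    (h : Homotopy ((G.mapHomologicalComplex (ComplexShape.up ℤ)).map φ ≫ cplxCounit adj J)
      ((G.mapHomologicalComplex (ComplexShape.up ℤ)).map ψ ≫ cplxCounit adj J)) :
    Nonempty (Homotopy φ ψ) := by
  have key : ∀ φ : X ⟶ (F.mapHomologicalComplex (ComplexShape.up ℤ)).obj J,
      cplxTranspose adj (𝟙 _) ≫ (F.mapHomologicalComplex (ComplexShape.up ℤ)).map
        ((G.mapHomologicalComplex (ComplexShape.up ℤ)).map φ ≫ cplxCounit adj J) = φ := by
    intro φ
    ext i
    exact transpose_id adj (φ.f i)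
  have h2 := (F.mapHomotopy h).compLeft (cplxTranspose adj (𝟙 _))
  rw [key, key] at h2
  exact ⟨h2⟩

variable [PreservesFiniteLimits G] [PreservesFiniteColimits G]

/-- The comparison map on Hom sets. -/
noncomputable def compMap (X : DerivedCategory C) (J : CochainComplex D ℤ)
    (f : X ⟶ DerivedCategory.Q.obj ((F.mapHomologicalComplex (ComplexShape.up ℤ)).obj J)) :
    G.mapDerivedCategory.obj X ⟶ DerivedCategory.Q.obj J :=
  G.mapDerivedCategory.map f ≫ G.mapDerivedCategoryFactors.hom.app _ ≫
    DerivedCategory.Q.map (cplxCounit adj J)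

lemma compMap_Q (X : CochainComplex C ℤ) (J : CochainComplex D ℤ)
    (φ : X ⟶ ((F.mapHomologicalComplex (ComplexShape.up ℤ)).obj J)) :
    compMap adj _ J (DerivedCategory.Q.map φ) = G.mapDerivedCategoryFactors.hom.app _ ≫
      DerivedCategory.Q.map ((G.mapHomologicalComplex (ComplexShape.up ℤ)).map φ ≫
        cplxCounit adj J) := by
  rw [compMap, Functor.mapDerivedCategoryFactors_hom_naturality_assoc, Functor.map_comp]

lemma compMap_bijective (X : CochainComplex C ℤ) (J : CochainComplex D ℤ) [J.IsKInjective]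
    [CochainComplex.IsKInjective ((F.mapHomologicalComplex (ComplexShape.up ℤ)).obj J)] :
    Function.Bijective (compMap adj (DerivedCategory.Q.obj X) J) := by
  constructor
  · intro f₁ f₂ h
    obtain ⟨φ₁, rfl⟩ := Q_map_surj_of_isKInjective _ _ f₁
    obtain ⟨φ₂, rfl⟩ := Q_map_surj_of_isKInjective _ _ f₂
    rw [compMap_Q, compMap_Q, cancel_epi] at h
    obtain ⟨h⟩ := homotopy_of_Q_map_eq _ _ _ _ h
    obtain ⟨h⟩ := homotopy_of_counit adj _ _ h
    exact Q_map_eq_of_homotopy h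
  · intro g
    obtain ⟨γ, hγ⟩ := Q_map_surj_of_isKInjective _ _
      (G.mapDerivedCategoryFactors.inv.app X ≫ g)
    refine ⟨DerivedCategory.Q.map (cplxTranspose adj γ), ?_⟩
    rw [compMap_Q, cplxTranspose_counit, hγ]
    simp

lemma mapDerived_bijective (X X' : CochainComplex C ℤ) (J : CochainComplex D ℤ) [J.IsKInjective]
    [CochainComplex.IsKInjective ((F.mapHomologicalComplex (ComplexShape.up ℤ)).obj J)]
    (i : (G.mapHomologicalComplex (ComplexShape.up ℤ)).obj X' ⟶ J) [QuasiIso i]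
    [G.ReflectsIsomorphisms] [QuasiIso (cplxCounit adj J)] :
    Function.Bijective (fun f : DerivedCategory.Q.obj X ⟶ DerivedCategory.Q.obj X' =>
      G.mapDerivedCategory.map f) := by
  have h0 := cplxTranspose_counit adj i
  have h1 : QuasiIso ((G.mapHomologicalComplex (ComplexShape.up ℤ)).map (cplxTranspose adj i)) := by
    rw [← quasiIso_iff_comp_right _ (cplxCounit adj J), h0]
    infer_instance
  have h2 : QuasiIso (cplxTranspose adj i) := by
    rwa [HomologicalComplex.quasiIso_map_iff_of_preservesHomology] at h1
  have e : IsIso (DerivedCategory.Q.map (cplxTranspose adj i)) := inferInstance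
  have e' : IsIso (DerivedCategory.Q.map i) := inferInstance
  have key : ∀ f : DerivedCategory.Q.obj X ⟶ DerivedCategory.Q.obj X',
      compMap adj (DerivedCategory.Q.obj X) J (f ≫ DerivedCategory.Q.map (cplxTranspose adj i)) =
      G.mapDerivedCategory.map f ≫ G.mapDerivedCategoryFactors.hom.app _ ≫
        DerivedCategory.Q.map i := by
    intro f
    conv_rhs => rw [← h0]
    rw [← compMap_Q, compMap, compMap, Functor.map_comp, Category.assoc]
  have hb := compMap_bijective adj X J
  constructor
  · intro f₁ f₂ h
    dsimp at h
    rw [← cancel_mono (DerivedCategory.Q.map (cplxTranspose adj i))]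
    apply hb.injective
    rw [key, key, h]
  · intro g
    obtain ⟨f, hf⟩ := hb.surjective (g ≫ G.mapDerivedCategoryFactors.hom.app _ ≫
        DerivedCategory.Q.map i)
    refine ⟨f ≫ inv (DerivedCategory.Q.map (cplxTranspose adj i)), ?_⟩
    have := key (f ≫ inv (DerivedCategory.Q.map (cplxTranspose adj i)))
    rw [Category.assoc, IsIso.inv_hom_id, Category.comp_id, hf] at this
    dsimp
    rw [← cancel_mono (G.mapDerivedCategoryFactors.hom.app _ ≫ DerivedCategory.Q.map i)]
    exact this.symm

end GeneralAdjunction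

section ModuleComplexes

open CategoryTheory Limits

variable {R : Type u} [Ring R]

lemma exists_cycle_elt (K : CochainComplex (ModuleCat.{u} R) ℤ) (i j : ℤ) (hij : i + 1 = j)
    (x : K.X i) (hx : K.d i j x = 0) : ∃ z : K.cycles i, K.iCycles i z = x :=
  ⟨K.cyclesMk x j ((ComplexShape.up ℤ).next_eq' hij) hx,
    K.i_cyclesMk x j ((ComplexShape.up ℤ).next_eq' hij) hx⟩

lemma d_iCycles_elt (K : CochainComplex (ModuleCat.{u} R) ℤ) (i j : ℤ) (z : K.cycles i) :
    K.d i j (K.iCycles i z) = 0 := by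
  rw [← ModuleCat.comp_apply, K.iCycles_d]; rfl

lemma iCycles_injective (K : CochainComplex (ModuleCat.{u} R) ℤ) (i : ℤ) :
    Function.Injective (K.iCycles i) :=
  (ModuleCat.mono_iff_injective _).1 inferInstance

lemma homologyπ_surjective (K : CochainComplex (ModuleCat.{u} R) ℤ) (i : ℤ) :
    Function.Surjective (K.homologyπ i) :=
  (ModuleCat.epi_iff_surjective _).1 inferInstance

lemma homologyπ_eq_zero_iff (K : CochainComplex (ModuleCat.{u} R) ℤ) (i j : ℤ) (hij : i + 1 = j)
    (z : K.cycles j) : K.homologyπ j z = 0 ↔ ∃ y : K.X i, K.d i j y = K.iCycles j z := by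
  have hij' := (ComplexShape.up ℤ).prev_eq' hij
  constructor
  · intro h
    have ex := ShortComplex.exact_of_g_is_cokernel
      (ShortComplex.mk (K.toCycles i j) (K.homologyπ j) (by simp))
      (K.homologyIsCokernel i j hij')
    rw [ShortComplex.moduleCat_exact_iff] at ex
    obtain ⟨y, hy⟩ := ex z h
    refine ⟨y, ?_⟩
    have hy' : K.toCycles i j y = z := hy
    rw [← hy', ← ModuleCat.comp_apply, K.toCycles_i]
  · rintro ⟨y, hy⟩
    have : K.toCycles i j y = z := by
      apply iCycles_injective
      rw [← hy, ← ModuleCat.comp_apply, K.toCycles_i]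
    rw [← this, ← ModuleCat.comp_apply, K.toCycles_comp_homologyπ]; rfl

lemma homologyMap_π_elt {K L : CochainComplex (ModuleCat.{u} R) ℤ} (φ : K ⟶ L) (i : ℤ)
    (z : K.cycles i) : HomologicalComplex.homologyMap φ i (K.homologyπ i z) =
      L.homologyπ i (HomologicalComplex.cyclesMap φ i z) := by
  rw [← ModuleCat.comp_apply, ← ModuleCat.comp_apply, HomologicalComplex.homologyπ_naturality]

lemma cyclesMap_i_elt {K L : CochainComplex (ModuleCat.{u} R) ℤ} (φ : K ⟶ L) (i : ℤ)
    (z : K.cycles i) : L.iCycles i (HomologicalComplex.cyclesMap φ i z) =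
      φ.f i (K.iCycles i z) := by
  rw [← ModuleCat.comp_apply, ← ModuleCat.comp_apply, HomologicalComplex.cyclesMap_i]

lemma quasiIsoAt_surj_elt {K L : CochainComplex (ModuleCat.{u} R) ℤ} (φ : K ⟶ L)
    (i j k : ℤ) (hij : i + 1 = j) (hjk : j + 1 = k) [QuasiIsoAt φ j]
    (y : L.X j) (hy : L.d j k y = 0) :
    ∃ (x : K.X j) (v : L.X i), K.d j k x = 0 ∧ y = φ.f j x + L.d i j v := by
  obtain ⟨w, rfl⟩ := exists_cycle_elt L j k hjk y hy
  have hs : Function.Surjective (HomologicalComplex.homologyMap φ j) :=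
    (ModuleCat.epi_iff_surjective _).1 inferInstance
  obtain ⟨h, hh⟩ := hs (L.homologyπ j w)
  obtain ⟨z, rfl⟩ := homologyπ_surjective K j h
  rw [homologyMap_π_elt, eq_comm, ← sub_eq_zero, ← map_sub, homologyπ_eq_zero_iff L i j hij] at hh
  obtain ⟨v, hv⟩ := hh
  refine ⟨K.iCycles j z, v, d_iCycles_elt _ _ _ _, ?_⟩
  rw [hv, map_sub, cyclesMap_i_elt]
  abel

lemma quasiIsoAt_of_elt {K L : CochainComplex (ModuleCat.{u} R) ℤ} (φ : K ⟶ L)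
    (i j k : ℤ) (hij : i + 1 = j) (hjk : j + 1 = k)
    (hinj : ∀ (x : K.X j) (v : L.X i), K.d j k x = 0 → φ.f j x = L.d i j v →
      ∃ u : K.X i, K.d i j u = x)
    (hsurj : ∀ (y : L.X j), L.d j k y = 0 →
      ∃ (x : K.X j) (v : L.X i), K.d j k x = 0 ∧ y = φ.f j x + L.d i j v) :
    QuasiIsoAt φ j := by
  rw [quasiIsoAt_iff_isIso_homologyMap]
  have h1 : Mono (HomologicalComplex.homologyMap φ j) := by
    rw [ModuleCat.mono_iff_injective, injective_iff_map_eq_zero]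
    intro h hh
    obtain ⟨z, rfl⟩ := homologyπ_surjective K j h
    rw [homologyMap_π_elt, homologyπ_eq_zero_iff L i j hij] at hh
    obtain ⟨v, hv⟩ := hh
    rw [homologyπ_eq_zero_iff K i j hij]
    exact hinj _ v (d_iCycles_elt _ _ _ _) (by rw [hv, cyclesMap_i_elt])
  have h2 : Epi (HomologicalComplex.homologyMap φ j) := by
    rw [ModuleCat.epi_iff_surjective]
    intro h
    obtain ⟨w, rfl⟩ := homologyπ_surjective L j h
    obtain ⟨x, v, hx, e⟩ := hsurj _ (d_iCycles_elt L j k w)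
    obtain ⟨z, rfl⟩ := exists_cycle_elt K j k hjk x hx
    refine ⟨K.homologyπ j z, ?_⟩
    rw [homologyMap_π_elt, eq_comm, ← sub_eq_zero, ← map_sub, homologyπ_eq_zero_iff L i j hij]
    refine ⟨v, ?_⟩
    rw [map_sub, cyclesMap_i_elt, e]
    abel
  exact isIso_of_mono_of_epi _

lemma exactAt_iff_elt (K : CochainComplex (ModuleCat.{u} R) ℤ) (i j k : ℤ) (hij : i + 1 = j)
    (hjk : j + 1 = k) :
    K.ExactAt j ↔ ∀ x : K.X j, K.d j k x = 0 → ∃ u : K.X i, K.d i j u = x := by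
  rw [K.exactAt_iff' i j k ((ComplexShape.up ℤ).prev_eq' hij) ((ComplexShape.up ℤ).next_eq' hjk),
    ShortComplex.moduleCat_exact_iff]
  rfl

end ModuleComplexes
section IdealPart

open CategoryTheory Limits

variable {A : Type u} [Ring A] (I : Ideal A)

lemma proj_surjective : Function.Surjective (quotByIdealProj A I) :=
  RingQuot.mkRingHom_surjective _

lemma proj_eq_zero {a : A} (ha : a ∈ I) : quotByIdealProj A I a = 0 := by
  have := RingQuot.mkRingHom_rel (r := fun a b : A => a ∈ I ∧ b = 0) (x := a) (y := 0) ⟨ha, rfl⟩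
  rw [map_zero] at this
  exact this

lemma mem_of_proj_eq_zero (htwosided : ∀ x ∈ I, ∀ a : A, x * a ∈ I) {a : A}
    (ha : quotByIdealProj A I a = 0) : a ∈ I := by
  have : I.IsTwoSided := ⟨fun b h => htwosided _ h b⟩
  let l : RingQuot (fun a b : A => a ∈ I ∧ b = 0) →+* A ⧸ I :=
    RingQuot.lift ⟨Ideal.Quotient.mk I, fun x y h => by
      rw [h.2, map_zero]; exact Ideal.Quotient.eq_zero_iff_mem.2 h.1⟩
  have h1 : l (RingQuot.mkRingHom _ a) = Ideal.Quotient.mk I a := RingQuot.lift_mkRingHom_apply _ _ _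
  have h2 : RingQuot.mkRingHom (fun a b : A => a ∈ I ∧ b = 0) a = 0 := ha
  rw [h2, map_zero] at h1
  exact Ideal.Quotient.eq_zero_iff_mem.1 h1.symm

/-- restriction of scalars along the quotient map -/
noncomputable abbrev resB := ModuleCat.restrictScalars.{u} (quotByIdealProj A I)
/-- coextension of scalars along the quotient map -/
noncomputable abbrev coextB : ModuleCat.{u} A ⥤ ModuleCat.{u} (QuotByIdeal A I) :=
  ModuleCat.coextendScalars (quotByIdealProj A I)
/-- the adjunction -/
noncomputable abbrev adjB : resB I ⊣ coextB I :=
  ModuleCat.restrictCoextendScalarsAdj (quotByIdealProj A I)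

instance : (coextB I).Additive := (adjB I).right_adjoint_additive

lemma smul_resB (M : ModuleCat.{u} (QuotByIdeal A I)) (a : A) (ha : a ∈ I)
    (x : (resB I).obj M) : a • x = 0 := by
  have : a • x = (quotByIdealProj A I a) • (show M from x) := rfl
  rw [this, proj_eq_zero I ha, zero_smul]
  rfl

/-- the counit as a map on elements -/
lemma counit_torsion (M : ModuleCat.{u} A) (x : (resB I).obj ((coextB I).obj M)) (a : A)
    (ha : a ∈ I) : a • (adjB I).counit.app M x = 0 := by
  rw [← map_smul, smul_resB I _ a ha, map_zero]

lemma counit_injective (M : ModuleCat.{u} A) : Function.Injective ((adjB I).counit.app M) := by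
  intro (x : (ModuleCat.restrictScalars (quotByIdealProj A I)).obj (ModuleCat.of _ (QuotByIdeal A I)) →ₗ[A] M) (y : (ModuleCat.restrictScalars (quotByIdealProj A I)).obj (ModuleCat.of _ (QuotByIdeal A I)) →ₗ[A] M) h
  have h' : x (1 : QuotByIdeal A I) = y (1 : QuotByIdeal A I) := h
  refine LinearMap.ext fun b => ?_
  obtain ⟨a, rfl⟩ := proj_surjective I b
  have e : quotByIdealProj A I a = a • (show (ModuleCat.restrictScalars (quotByIdealProj A I)).obj (ModuleCat.of _ (QuotByIdeal A I)) from (1 : QuotByIdeal A I)) :=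
    (mul_one (quotByIdealProj A I a)).symm
  rw [e, map_smul, map_smul]
  exact congrArg _ h'

lemma exists_counit (htwosided : ∀ x ∈ I, ∀ a : A, x * a ∈ I) (M : ModuleCat.{u} A) (m : M)
    (hm : ∀ a ∈ I, a • m = 0) : ∃ x, (adjB I).counit.app M x = m := by
  have key : ∀ a b : A, quotByIdealProj A I a = quotByIdealProj A I b → a • m = b • m := by
    intro a b h
    rw [← sub_eq_zero, ← sub_smul]
    exact hm _ (mem_of_proj_eq_zero I htwosided (by rw [map_sub, h, sub_self]))
  let s := Function.surjInv (proj_surjective I)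
  have hs : ∀ b, quotByIdealProj A I (s b) = b := Function.surjInv_eq _
  let g : (ModuleCat.restrictScalars (quotByIdealProj A I)).obj
      (ModuleCat.of _ (QuotByIdeal A I)) →ₗ[A] M :=
    { toFun := fun b => s b • m
      map_add' := fun b c => by
        rw [← add_smul]; refine key _ _ ?_
        rw [map_add]; exact (hs _).trans (congrArg₂ (· + ·) (hs b) (hs c)).symm
      map_smul' := fun a b => by
        rw [RingHom.id_apply, smul_smul]; refine key _ _ ?_
        rw [map_mul]; exact (hs _).trans (congrArg (quotByIdealProj A I a * ·) (hs b)).symm }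
  refine ⟨g, ?_⟩
  change s 1 • m = m
  rw [key (s 1) 1 (by rw [hs, map_one]), one_smul]

lemma core_lift (hproj : Module.Projective A ↥I) (N M : ModuleCat.{u} A) [Injective N]
    (d : N ⟶ M) (w : M) (hw : ∀ a ∈ I, ∃ n, d n = a • w) :
    ∃ v : N, ∀ a ∈ I, a • (w - d v) = 0 := by
  have hN : Module.Injective A N := Module.injective_module_of_injective_object A N
  let p : I →ₗ[A] LinearMap.range d.hom :=
    LinearMap.codRestrict _ ((LinearMap.toSpanSingleton A M w).comp I.subtype)
      (fun a => by obtain ⟨n, hn⟩ := hw a a.2; exact ⟨n, hn⟩)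
  obtain ⟨h, hh⟩ := Module.projective_lifting_property d.hom.rangeRestrict p
    d.hom.surjective_rangeRestrict
  obtain ⟨k, hk⟩ := Module.Baer.of_injective hN I h
  refine ⟨k 1, fun a ha => ?_⟩
  have h1 : d (h ⟨a, ha⟩) = a • w := congrArg Subtype.val (LinearMap.congr_fun hh ⟨a, ha⟩)
  rw [smul_sub, ← map_smul, ← map_smul, smul_eq_mul, mul_one, hk a ha, h1, sub_self]

lemma smul_of_idem
    (hidem : Submodule.span A {z : A | ∃ p ∈ I, ∃ q ∈ I, z = p * q} = I)
    (M : ModuleCat.{u} A) (P : Submodule A M) (w : M)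
    (h : ∀ p ∈ I, ∀ q ∈ I, p • q • w ∈ P) (a : A) (ha : a ∈ I) : a • w ∈ P := by
  rw [← hidem] at ha
  induction ha using Submodule.span_induction with
  | mem x hx => obtain ⟨p, hp, q, hq, rfl⟩ := hx; rw [mul_smul]; exact h p hp q hq
  | zero => rw [zero_smul]; exact P.zero_mem
  | add x y _ _ hx hy => rw [add_smul]; exact P.add_mem hx hy
  | smul c x _ hx => rw [smul_eq_mul, mul_smul]; exact P.smul_mem _ hx

lemma step_four (hidem : Submodule.span A {z : A | ∃ p ∈ I, ∃ q ∈ I, z = p * q} = I)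
    (hproj : Module.Projective A ↥I) (J : CochainComplex (ModuleCat.{u} A) ℤ)
    (i j k : ℤ) [Injective (J.X i)]
    (hJ : ∀ z : J.X j, J.d j k z = 0 → ∀ a ∈ I, ∃ n, J.d i j n = a • z)
    (w : J.X j) (hw : ∀ a ∈ I, a • J.d j k w = 0) :
    ∃ v : J.X i, ∀ a ∈ I, a • (w - J.d i j v) = 0 := by
  refine core_lift I hproj _ _ (J.d i j) w ?_
  intro a ha
  refine smul_of_idem I hidem _ (LinearMap.range (J.d i j).hom) w ?_ a ha
  intro p hp q hq
  exact hJ (q • w) (by rw [map_smul]; exact hw q hq) p hp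

lemma d_d_elt {R : Type u} [Ring R] (K : CochainComplex (ModuleCat.{u} R) ℤ) (i j k : ℤ)
    (x : K.X i) : K.d j k (K.d i j x) = 0 := by
  rw [← ModuleCat.comp_apply, K.d_comp_d]; rfl

lemma cplxCounit_comm_elt (J : CochainComplex (ModuleCat.{u} A) ℤ) (i j : ℤ)
    (x : (coextB I).obj (J.X i)) :
    J.d i j ((adjB I).counit.app (J.X i) x) =
      (adjB I).counit.app (J.X j) ((coextB I).map (J.d i j) x) := by
  have := (adjB I).counit.naturality (J.d i j)
  exact (congrArg (fun f => f.hom x) this).symm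

lemma counit_exact_aux (htwosided : ∀ x ∈ I, ∀ a : A, x * a ∈ I)
    (hidem : Submodule.span A {z : A | ∃ p ∈ I, ∃ q ∈ I, z = p * q} = I)
    (hproj : Module.Projective A ↥I) (J : CochainComplex (ModuleCat.{u} A) ℤ)
    (h i j : ℤ) [Injective (J.X h)]
    (hJ : ∀ z : J.X i, J.d i j z = 0 → ∀ a ∈ I, ∃ n, J.d h i n = a • z)
    (x : (coextB I).obj (J.X j)) (v : J.X i)
    (hv : (adjB I).counit.app (J.X j) x = J.d i j v) :
    ∃ u : (coextB I).obj (J.X i), (coextB I).map (J.d i j) u = x := by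
  obtain ⟨v', hv'⟩ := step_four I hidem hproj J h i j hJ v (fun a ha => by
    rw [← hv]; exact counit_torsion I _ x a ha)
  obtain ⟨u, hu⟩ := exists_counit I htwosided _ _ hv'
  refine ⟨u, ?_⟩
  apply counit_injective I (J.X j)
  rw [hv]
  refine (cplxCounit_comm_elt I J i j u).symm.trans ?_
  rw [hu, map_sub, d_d_elt, sub_zero]

lemma quasiIso_cplxCounit (htwosided : ∀ x ∈ I, ∀ a : A, x * a ∈ I)
    (hidem : Submodule.span A {z : A | ∃ p ∈ I, ∃ q ∈ I, z = p * q} = I)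
    (hproj : Module.Projective A ↥I) (J : CochainComplex (ModuleCat.{u} A) ℤ)
    [∀ n, Injective (J.X n)]
    (hJ : ∀ (i j k : ℤ) (_ : i + 1 = j) (_ : j + 1 = k) (z : J.X j), J.d j k z = 0 →
      ∀ a ∈ I, ∃ n, J.d i j n = a • z) :
    QuasiIso (cplxCounit (adjB I) J) := by
  refine ⟨fun j => quasiIsoAt_of_elt _ (j - 1) j (j + 1) (by lia) rfl ?_ ?_⟩
  · intro x v _ hv
    exact counit_exact_aux I htwosided hidem hproj J (j - 1 - 1) (j - 1) j
      (hJ _ _ _ (by lia) (by lia)) x v hv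
  · intro y hy
    obtain ⟨v, hv⟩ := step_four I hidem hproj J (j - 1) j (j + 1)
      (hJ _ _ _ (by lia) (by lia)) y (fun a _ => by rw [hy, smul_zero])
    obtain ⟨x, hx⟩ := exists_counit I htwosided _ _ hv
    refine ⟨x, v, ?_, ?_⟩
    · apply counit_injective I (J.X (j + 1))
      refine (cplxCounit_comm_elt I J j (j + 1) x).symm.trans ?_
      rw [hx, map_sub, d_d_elt, sub_zero, hy]
      exact (map_zero ((adjB I).counit.app (J.X (j + 1))).hom).symm
    · have : (cplxCounit (adjB I) J).f j x = y - J.d (j - 1) j v := hx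
      rw [this]; abel

lemma exactAt_coext (htwosided : ∀ x ∈ I, ∀ a : A, x * a ∈ I)
    (hidem : Submodule.span A {z : A | ∃ p ∈ I, ∃ q ∈ I, z = p * q} = I)
    (hproj : Module.Projective A ↥I) (J : CochainComplex (ModuleCat.{u} A) ℤ)
    [∀ n, Injective (J.X n)] (i j : ℤ) (hij : i + 1 = j) (hi : J.ExactAt i) (hj : J.ExactAt j) :
    (((coextB I).mapHomologicalComplex (ComplexShape.up ℤ)).obj J).ExactAt j := by
  rw [exactAt_iff_elt _ i j (j + 1) hij rfl] at hj ⊢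
  rw [exactAt_iff_elt _ (i - 1) i j (by lia) hij] at hi
  intro x hx
  obtain ⟨v, hv⟩ := hj ((adjB I).counit.app (J.X j) x) (by
    refine (cplxCounit_comm_elt I J j (j + 1) x).trans ?_
    have hx' : (coextB I).map (J.d j (j + 1)) x = 0 := hx
    erw [hx', map_zero])
  refine counit_exact_aux I htwosided hidem hproj J (i - 1) i j ?_ x v hv.symm
  intro z hz a _
  exact hi (a • z) (by rw [map_smul, hz, smul_zero])

lemma torsion_homology (X : CochainComplex (ModuleCat.{u} (QuotByIdeal A I)) ℤ)
    (J : CochainComplex (ModuleCat.{u} A) ℤ)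
    (φ : ((resB I).mapHomologicalComplex (ComplexShape.up ℤ)).obj X ⟶ J) [QuasiIso φ]
    (i j k : ℤ) (hij : i + 1 = j) (hjk : j + 1 = k) (z : J.X j) (hz : J.d j k z = 0)
    (a : A) (ha : a ∈ I) : ∃ n, J.d i j n = a • z := by
  obtain ⟨x, v, -, rfl⟩ := quasiIsoAt_surj_elt φ i j k hij hjk z hz
  refine ⟨a • v, ?_⟩
  have hx : a • x = 0 := smul_resB I _ a ha x
  rw [smul_add, map_smul, ← map_smul (φ.f j).hom, hx, map_zero, zero_add]

end IdealPart
section Assembly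

open CategoryTheory Limits

variable {A : Type u} [Ring A] (I : Ideal A)

instance : (resB I).PreservesMonomorphisms := inferInstance

/-- the bounded objects of the derived category -/
abbrev IsBddObj {C : Type*} [Category C] [Abelian C] [HasDerivedCategory C]
    (Z : DerivedCategory C) : Prop :=
  ∃ K : CochainComplex C ℤ, IsBoundedComplex K ∧ Nonempty (Z ≅ DerivedCategory.Q.obj K)

lemma map_isBoundedComplex {C D : Type*} [Category C] [Category D] [Abelian C] [Abelian D]
    (G : C ⥤ D) [G.Additive] (K : CochainComplex C ℤ) (hK : IsBoundedComplex K) :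
    IsBoundedComplex ((G.mapHomologicalComplex (ComplexShape.up ℤ)).obj K) := by
  obtain ⟨a, b, h⟩ := hK
  exact ⟨a, b, fun i hi => G.map_isZero (h i hi)⟩

lemma map_isBddObj (Z : DerivedCategory (ModuleCat.{u} (QuotByIdeal A I))) (hZ : IsBddObj Z) :
    IsBddObj ((resB I).mapDerivedCategory.obj Z) := by
  obtain ⟨K, hK, ⟨e⟩⟩ := hZ
  exact ⟨_, map_isBoundedComplex (resB I) K hK, ⟨(resB I).mapDerivedCategory.mapIso e ≪≫
    (resB I).mapDerivedCategoryFactors.app K⟩⟩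

lemma exists_resolution (K : CochainComplex (ModuleCat.{u} A) ℤ) (hK : IsBoundedComplex K) :
    ∃ (J : CochainComplex (ModuleCat.{u} A) ℤ) (i : K ⟶ J), QuasiIso i ∧
      (∀ n, Injective (J.X n)) ∧ J.IsKInjective ∧ CochainComplex.IsKInjective
        (((coextB I).mapHomologicalComplex (ComplexShape.up ℤ)).obj J) ∧
      (∃ a : ℤ, J.IsStrictlyGE a) ∧ ∃ b : ℤ, ∀ n > b, J.ExactAt n := by
  obtain ⟨a, b, h⟩ := hK
  have : K.IsStrictlyGE a := by
    rw [CochainComplex.isStrictlyGE_iff]; exact fun i hi => h i (Or.inl hi)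
  obtain ⟨J, i, h1, h2, h3⟩ :=
    CochainComplex.Plus.modelCategoryQuillen.exists_quasiIso_injective K a
  have h4 : CochainComplex.IsStrictlyGE
      (((coextB I).mapHomologicalComplex (ComplexShape.up ℤ)).obj J) a := by
    rw [CochainComplex.isStrictlyGE_iff]
    exact fun i hi => (coextB I).map_isZero (J.isZero_of_isStrictlyGE a i hi)
  have h5 : ∀ n, Injective ((((coextB I).mapHomologicalComplex (ComplexShape.up ℤ)).obj J).X n) :=
    fun n => (adjB I).map_injective _ (h2 n)
  refine ⟨J, i, h1, h2, CochainComplex.isKInjective_of_injective J a,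
    CochainComplex.isKInjective_of_injective _ a, ⟨a, h3⟩, b, fun n hn => ?_⟩
  have hn' : K.ExactAt n := by
    rw [HomologicalComplex.exactAt_iff_isZero_homology]
    exact ShortComplex.isZero_homology_of_isZero_X₂ _ (h n (Or.inr hn))
  rw [← quasiIsoAt_iff_exactAt i n hn']
  infer_instance

lemma coext_bounded (htwosided : ∀ x ∈ I, ∀ a : A, x * a ∈ I)
    (hidem : Submodule.span A {z : A | ∃ p ∈ I, ∃ q ∈ I, z = p * q} = I)
    (hproj : Module.Projective A ↥I) (J : CochainComplex (ModuleCat.{u} A) ℤ)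
    (hinj : ∀ n, Injective (J.X n)) (a b : ℤ) (ha : J.IsStrictlyGE a)
    (hb : ∀ n > b, J.ExactAt n) :
    IsBddObj (DerivedCategory.Q.obj
      (((coextB I).mapHomologicalComplex (ComplexShape.up ℤ)).obj J)) := by
  let L : CochainComplex (ModuleCat.{u} (QuotByIdeal A I)) ℤ :=
    ((coextB I).mapHomologicalComplex (ComplexShape.up ℤ)).obj J
  let n := max a (b + 1)
  have hLE : L.IsLE n := by
    rw [CochainComplex.isLE_iff]
    intro i hi
    exact exactAt_coext I htwosided hidem hproj J (i - 1) i (by lia) (hb _ (by lia)) (hb _ (by lia))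
  refine ⟨L.truncLE n, ⟨a, n, ?_⟩, ⟨(asIso (DerivedCategory.Q.map (L.ιTruncLE n))).symm⟩⟩
  rintro i (hi | hi)
  · exact ((coextB I).map_isZero (J.isZero_of_isStrictlyGE a i hi)).of_iso
      (L.truncLEXIso n i (by lia))
  · exact CochainComplex.isZero_of_isStrictlyLE _ n i hi

lemma exists_right_adjoint_obj (htwosided : ∀ x ∈ I, ∀ a : A, x * a ∈ I)
    (hidem : Submodule.span A {z : A | ∃ p ∈ I, ∃ q ∈ I, z = p * q} = I)
    (hproj : Module.Projective A ↥I) (Y : DerivedCategory (ModuleCat.{u} A)) (hY : IsBddObj Y) :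
    ∃ (Y' : DerivedCategory (ModuleCat.{u} (QuotByIdeal A I))) (_ : IsBddObj Y')
      (ε : (resB I).mapDerivedCategory.obj Y' ⟶ Y),
      ∀ X, Function.Bijective (fun f : X ⟶ Y' => (resB I).mapDerivedCategory.map f ≫ ε) := by
  obtain ⟨K, hK, ⟨e⟩⟩ := hY
  obtain ⟨J, i, h1, h2, h3, h4, ⟨a, h5⟩, b, h6⟩ := exists_resolution I K hK
  let e' : Y ≅ DerivedCategory.Q.obj J := e ≪≫ asIso (DerivedCategory.Q.map i)
  refine ⟨_, coext_bounded I htwosided hidem hproj J h2 a b h5 h6,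
    (resB I).mapDerivedCategoryFactors.hom.app _ ≫
      DerivedCategory.Q.map (cplxCounit (adjB I) J) ≫ e'.inv, ?_⟩
  intro X
  let X₀ := DerivedCategory.Q.objPreimage X
  let t : DerivedCategory.Q.obj X₀ ≅ X := DerivedCategory.Q.objObjPreimageIso X
  have hb := compMap_bijective (adjB I) X₀ J
  constructor
  · intro f₁ f₂ h
    rw [← cancel_epi t.hom]
    apply hb.injective
    dsimp only at h
    rw [← cancel_epi ((resB I).mapDerivedCategory.map t.hom), ← cancel_mono e'.hom] at h
    simpa [compMap] using h
  · intro g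
    obtain ⟨f, hf⟩ := hb.surjective ((resB I).mapDerivedCategory.map t.hom ≫ g ≫ e'.hom)
    refine ⟨t.inv ≫ f, ?_⟩
    dsimp only
    rw [compMap] at hf
    rw [← cancel_epi ((resB I).mapDerivedCategory.map t.hom), ← cancel_mono e'.hom]
    simp only [Category.assoc, Iso.inv_hom_id, Category.comp_id]
    rw [← hf, ← Functor.map_comp_assoc, Iso.hom_inv_id_assoc]

lemma mapDerived_bijective_of_bdd (htwosided : ∀ x ∈ I, ∀ a : A, x * a ∈ I)
    (hidem : Submodule.span A {z : A | ∃ p ∈ I, ∃ q ∈ I, z = p * q} = I)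
    (hproj : Module.Projective A ↥I)
    (X X' : DerivedCategory (ModuleCat.{u} (QuotByIdeal A I))) (hX' : IsBddObj X') :
    Function.Bijective (fun f : X ⟶ X' => (resB I).mapDerivedCategory.map f) := by
  obtain ⟨K, hK, ⟨e⟩⟩ := hX'
  obtain ⟨J, i, h1, h2, h3, h4, -, -⟩ := exists_resolution I _
    (map_isBoundedComplex (resB I) K hK)
  have h5 : QuasiIso (cplxCounit (adjB I) J) := quasiIso_cplxCounit I htwosided hidem hproj J
    (fun j k l hjk hkl z hz => torsion_homology I K J i j k l hjk hkl z hz)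
  let t : DerivedCategory.Q.obj (DerivedCategory.Q.objPreimage X) ≅ X :=
    DerivedCategory.Q.objObjPreimageIso X
  have hb := mapDerived_bijective (adjB I) (DerivedCategory.Q.objPreimage X) K J i
  constructor
  · intro f₁ f₂ h
    rw [← cancel_epi t.hom, ← cancel_mono e.hom]
    apply hb.injective
    dsimp only at h ⊢
    simp only [Functor.map_comp, h]
  · intro g
    obtain ⟨f, hf⟩ := hb.surjective ((resB I).mapDerivedCategory.map t.hom ≫ g ≫
      (resB I).mapDerivedCategory.map e.hom)
    refine ⟨t.inv ≫ f ≫ e.inv, ?_⟩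
    dsimp only at hf ⊢
    rw [Functor.map_comp, Functor.map_comp, hf]
    simp [← Functor.map_comp_assoc, ← Functor.map_comp]

/-- The functor on bounded derived categories induced by restriction of scalars. -/
noncomputable def istB : BoundedDerivedCategory (ModuleCat.{u} (QuotByIdeal A I)) ⥤
    BoundedDerivedCategory (ModuleCat.{u} A) :=
  ObjectProperty.lift _ (boundedInclusion (ModuleCat.{u} (QuotByIdeal A I)) ⋙
    (resB I).mapDerivedCategory) (fun Z => map_isBddObj I Z.obj Z.property)

end Assembly

/-- **Full embedding with right adjoint.**  Let `A` be a ring, `I` a two-sided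
idempotent ideal which is projective as a left `A`-module, and `B := A / I`.
Then the functor `i_* : D^b(B) → D^b(A)` induced by restriction of scalars
along `A → B` is fully faithful and admits a right adjoint `i^!` such that
`i^! ∘ i_*` is naturally isomorphic to the identity functor of `D^b(B)`. -/
theorem bounded_derived_full_embedding (A : Type u) [Ring A] (I : Ideal A)
    (htwosided : ∀ x ∈ I, ∀ a : A, x * a ∈ I)
    (hidem : Submodule.span A {z : A | ∃ p ∈ I, ∃ q ∈ I, z = p * q} = I)
    (hproj : Module.Projective A ↥I) :
    ∃ ist : BoundedDerivedCategory (ModuleCat.{u} (QuotByIdeal A I)) ⥤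
        BoundedDerivedCategory (ModuleCat.{u} A),
      -- `ist` is induced by the restriction of scalars functor
      Nonempty ((ist ⋙ boundedInclusion (ModuleCat.{u} A)) ≅
        (boundedInclusion (ModuleCat.{u} (QuotByIdeal A I)) ⋙
          (ModuleCat.restrictScalars (quotByIdealProj A I)).mapDerivedCategory)) ∧
      -- `ist` is a full embedding
      ist.Full ∧ ist.Faithful ∧
      -- `ist` admits a right adjoint `i^!` with `i^! ∘ i_* ≅ id`
      ∃ (ishriek : BoundedDerivedCategory (ModuleCat.{u} A) ⥤
          BoundedDerivedCategory (ModuleCat.{u} (QuotByIdeal A I)))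
        (_ : ist ⊣ ishriek),
        Nonempty ((ist ⋙ ishriek) ≅ 𝟭 _) := by
  have hff : ∀ X X' : BoundedDerivedCategory (ModuleCat.{u} (QuotByIdeal A I)),
      Function.Bijective (fun f : X ⟶ X' => (istB I).map f) := by
    intro X X'
    have hb := mapDerived_bijective_of_bdd I htwosided hidem hproj X.obj X'.obj X'.property
    constructor
    · intro f₁ f₂ h
      exact ObjectProperty.hom_ext _ (hb.injective (congrArg (fun t => t.hom) h))
    · intro g
      obtain ⟨f, hf⟩ := hb.surjective g.hom
      exact ⟨ObjectProperty.homMk f, ObjectProperty.hom_ext _ hf⟩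
  have hFull : (istB I).Full := ⟨fun {X Y} => (hff X Y).surjective⟩
  have hFaithful : (istB I).Faithful := ⟨fun {X Y} _ _ h => (hff X Y).injective h⟩
  choose Y' hY' ε hε using fun Y : BoundedDerivedCategory (ModuleCat.{u} A) =>
    exists_right_adjoint_obj I htwosided hidem hproj Y.obj Y.property
  let Gobj : BoundedDerivedCategory (ModuleCat.{u} A) →
      BoundedDerivedCategory (ModuleCat.{u} (QuotByIdeal A I)) := fun Y => ⟨Y' Y, hY' Y⟩
  let ε' : ∀ Y, (istB I).obj (Gobj Y) ⟶ Y := fun Y => ObjectProperty.homMk (ε Y)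
  have hbij : ∀ X Y, Function.Bijective (fun f : X ⟶ Gobj Y => (istB I).map f ≫ ε' Y) := by
    intro X Y
    have hb := hε Y X.obj
    constructor
    · intro f₁ f₂ h
      exact ObjectProperty.hom_ext _ (hb.injective (congrArg (fun t => t.hom) h))
    · intro g
      obtain ⟨f, hf⟩ := hb.surjective g.hom
      exact ⟨ObjectProperty.homMk f, ObjectProperty.hom_ext _ hf⟩
  let e : ∀ X Y, ((istB I).obj X ⟶ Y) ≃ (X ⟶ Gobj Y) :=
    fun X Y => (Equiv.ofBijective _ (hbij X Y)).symm
  have he : ∀ X' X Y (f : X' ⟶ X) g, e X' Y ((istB I).map f ≫ g) = f ≫ e X Y g := by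
    intro X' X Y f g
    obtain ⟨g, rfl⟩ := (e X Y).symm.surjective g
    rw [Equiv.apply_symm_apply, ← Equiv.eq_symm_apply]
    change (istB I).map f ≫ (istB I).map g ≫ ε' Y = (istB I).map (f ≫ g) ≫ ε' Y
    rw [Functor.map_comp, Category.assoc]
  let adj := Adjunction.adjunctionOfEquivRight e he
  exact ⟨istB I, ⟨Iso.refl _⟩, hFull, hFaithful, _, adj, ⟨(asIso adj.unit).symm⟩⟩
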